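/- arXiv:0810.1114 — 7 statements merged into one kernel-verified Lean document; each statement's English description precedes it below -/
import Mathlib

section
/- Let K be a field, V a finite-dimensional K-vector space, m ≥ 2 an integer, w a preregular m-linear form on V with associated automorphism Q_w, and L a linear automorphism of V. Then w∘L is preregular and Q_{w∘L} = L⁻¹ Q_w L. -/
/-- An `m`-linear form `w` (here `m = k + 1`) is `Q`-cyclic if
`w(X₁,…,X_m) = w(Q X_m, X₁, …, X_{m−1})` for all `X₁,…,X_m`. -/
def QCyclic {K V : Type*} [Field K] [AddCommGroup V] [Module K V] {k : ℕ}
    (Q : V ≃ₗ[K] V) (w : MultilinearMap K (fun _ : Fin (k + 1) => V) K) : Prop :=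
  ∀ (x : V) (Y : Fin k → V), w (Fin.snoc Y x) = w (Fin.cons (Q x) Y)

/-- Condition (i): `w(X, X₁, …, X_{m−1}) = 0` for all `X₁,…,X_{m−1}` implies `X = 0`. -/
def Nondeg1 {K V : Type*} [Field K] [AddCommGroup V] [Module K V] {k : ℕ}
    (w : MultilinearMap K (fun _ : Fin (k + 1) => V) K) : Prop :=
  ∀ x : V, (∀ Y : Fin k → V, w (Fin.cons x Y) = 0) → x = 0

/-- if `w` is a preregular `m`-linear form (`m = n + 2 ≥ 2`) with associated
automorphism `Q_w = Q`, and `L` is a linear automorphism, then `w∘L` (where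
`(w∘L)(X₁,…,X_m) = w(L X₁,…,L X_m)`) is preregular with `Q_{w∘L} = L⁻¹ Q L`. -/
theorem stmt_5 (K V : Type*) [Field K] [AddCommGroup V] [Module K V]
    [FiniteDimensional K V] (n : ℕ)
    (w : MultilinearMap K (fun _ : Fin (n + 2) => V) K)
    (Q L : V ≃ₗ[K] V) (hi : Nondeg1 w) (hQ : QCyclic Q w) :
    Nondeg1 (w.compLinearMap fun _ => L.toLinearMap) ∧
    QCyclic ((L.trans Q).trans L.symm) (w.compLinearMap fun _ => L.toLinearMap) := by
  have hcons : ∀ (x : V) (Y : Fin (n + 1) → V),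
      (w.compLinearMap fun _ => L.toLinearMap) (Fin.cons x Y)
        = w (Fin.cons (L x) (fun i => L (Y i))) := by
    intro x Y
    rw [MultilinearMap.compLinearMap_apply]
    congr 1
    funext i
    refine Fin.cases ?_ (fun j => ?_) i
    · simp
    · simp
  have hsnoc : ∀ (x : V) (Y : Fin (n + 1) → V),
      (w.compLinearMap fun _ => L.toLinearMap) (Fin.snoc Y x)
        = w (Fin.snoc (fun i => L (Y i)) (L x)) := by
    intro x Y
    rw [MultilinearMap.compLinearMap_apply]
    congr 1
    funext i
    refine Fin.lastCases ?_ (fun j => ?_) i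
    · simp
    · simp
  refine ⟨fun x hx => ?_, fun x Y => ?_⟩
  · have h0 : L x = 0 := by
      apply hi
      intro Y
      have h := hx (fun i => L.symm (Y i))
      rw [hcons] at h
      simpa using h
    simpa using h0
  · rw [hcons, hsnoc, hQ]
    simp
end

section
/- Let K be a field, N ≥ 2 an integer, and ε the completely antisymmetric (N+1)-linear form on K^{N+1} with ε(e₀, e₁, …, e_N) = 1 (the determinant form in the canonical basis). Then ε is 3-regular: (i) ε(X, X₁, …, X_N) = 0 for all X₁,…,X_N implies X = 0; (ii) ε is Q-cyclic for Q = (−1)^N·id; (iii) if L₀ and L₁ are endomorphisms of K^{N+1} satisfying ε(L₀ X₀, X₁, …, X_N) = ε(X₀, L₁ X₁, X₂, …, X_N) for all X₀,…,X_N ∈ K^{N+1}, then L₀ = L₁ = k·id for some k ∈ K. -/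
open Matrix

lemma det_update_perm {K : Type*} [Field K] {m : ℕ} (σ : Equiv.Perm (Fin m)) (j : Fin m)
    (v : Fin m → K) :
    (Matrix.of (Function.update (fun i => (Pi.single (σ i) 1 : Fin m → K)) j v)).det =
      (Equiv.Perm.sign σ : K) * v (σ j) := by
  have h1 : Matrix.of (Function.update (fun i => (Pi.single (σ i) 1 : Fin m → K)) j v) =
      ((1 : Matrix (Fin m) (Fin m) K).updateRow (σ j) v).submatrix σ id := by
    ext a b
    by_cases h : a = j
    · subst h
      simp
    · simp [h, Matrix.updateRow_apply, Matrix.one_apply, Pi.single_apply, eq_comm (a := b)]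
  rw [h1, Matrix.det_permute, ← Matrix.cramer_transpose_apply]
  simp

lemma exists_perm3 {n : ℕ} (a b c : Fin (n + 3)) (hab : a ≠ b) (hac : a ≠ c) (hbc : b ≠ c) :
    ∃ σ : Equiv.Perm (Fin (n + 3)), σ 0 = a ∧ σ 1 = b ∧ σ 2 = c := by
  have h01 : (0 : Fin (n + 3)) ≠ 1 := by simp [Fin.ext_iff]
  have h02 : (0 : Fin (n + 3)) ≠ 2 := by
    simp [Fin.ext_iff, Nat.mod_eq_of_lt (show 2 < n + 3 by omega)]
  have h12 : (1 : Fin (n + 3)) ≠ 2 := by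
    simp [Fin.ext_iff, Nat.mod_eq_of_lt (show 2 < n + 3 by omega)]
  let s := Equiv.swap (0 : Fin (n + 3)) a
  let t := Equiv.swap (s 1) b
  let u := Equiv.swap (t (s 2)) c
  have hs : s 0 = a := Equiv.swap_apply_left _ _
  have hs1 : s 1 ≠ a := fun h => h01 (s.injective (hs.trans h.symm))
  have hs2 : s 2 ≠ a := fun h => h02 (s.injective (hs.trans h.symm))
  have ht : t (s 1) = b := Equiv.swap_apply_left _ _
  have hta : t a = a := Equiv.swap_apply_of_ne_of_ne hs1.symm hab
  have ht2a : t (s 2) ≠ a := fun h => hs2 (t.injective (h.trans hta.symm))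
  have ht2b : t (s 2) ≠ b := fun h => h12 (s.injective (t.injective (ht.trans h.symm)))
  refine ⟨(s.trans t).trans u, ?_, ?_, ?_⟩
  · simp only [Equiv.trans_apply, hs, hta]
    exact Equiv.swap_apply_of_ne_of_ne ht2a.symm hac
  · simp only [Equiv.trans_apply, ht]
    exact Equiv.swap_apply_of_ne_of_ne ht2b.symm hbc
  · exact Equiv.swap_apply_left _ _

lemma exists_third {n : ℕ} (a b : Fin (n + 3)) : ∃ c, c ≠ a ∧ c ≠ b := by
  have : ({a, b} : Finset (Fin (n + 3))).card < Fintype.card (Fin (n + 3)) := by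
    have := Finset.card_le_two (a := a) (b := b)
    simp only [Fintype.card_fin]
    omega
  obtain ⟨c, hc⟩ := Finset.exists_mem_notMem_of_card_lt_card (t := Finset.univ) this
  exact ⟨c, by simpa using hc⟩


/-- the determinant form `ε` on `K^{N+1}` (`N = n + 2 ≥ 2`),
`ε(X₀,…,X_N) = det(X₀,…,X_N)`, is 3-regular:
(i) `ε(X, X₁, …, X_N) = 0` for all `X₁,…,X_N` implies `X = 0`;
(ii) `ε` is `Q`-cyclic for `Q = (−1)^N · id`;
(iii) if `L₀, L₁` are endomorphisms with `ε(L₀X₀, X₁,…,X_N) = ε(X₀, L₁X₁, X₂,…,X_N)`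
for all `X₀,…,X_N`, then `L₀ = L₁ = k · id` for some scalar `k`. -/
theorem stmt_7 (K : Type*) [Field K] (n : ℕ) :
    (∀ x : Fin (n + 3) → K,
      (∀ Y : Fin (n + 2) → (Fin (n + 3) → K),
        (Matrix.of (Fin.cons x Y : Fin (n + 3) → Fin (n + 3) → K)).det = 0) → x = 0) ∧
    (∀ (x : Fin (n + 3) → K) (Y : Fin (n + 2) → (Fin (n + 3) → K)),
      (Matrix.of (Fin.snoc Y x : Fin (n + 3) → Fin (n + 3) → K)).det =
        (Matrix.of (Fin.cons (((-1 : K) ^ (n + 2)) • x) Y : Fin (n + 3) → Fin (n + 3) → K)).det) ∧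
    (∀ L₀ L₁ : (Fin (n + 3) → K) →ₗ[K] (Fin (n + 3) → K),
      (∀ X : Fin (n + 3) → (Fin (n + 3) → K),
        (Matrix.of (Function.update X 0 (L₀ (X 0)))).det =
          (Matrix.of (Function.update X 1 (L₁ (X 1)))).det) →
      ∃ k : K, L₀ = k • LinearMap.id ∧ L₁ = k • LinearMap.id) := by
  have h01 : (0 : Fin (n + 3)) ≠ 1 := by simp [Fin.ext_iff]
  have h02 : (0 : Fin (n + 3)) ≠ 2 := by
    simp [Fin.ext_iff, Nat.mod_eq_of_lt (show 2 < n + 3 by omega)]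
  have h12 : (1 : Fin (n + 3)) ≠ 2 := by
    simp [Fin.ext_iff, Nat.mod_eq_of_lt (show 2 < n + 3 by omega)]
  have sg : ∀ σ : Equiv.Perm (Fin (n + 3)), ((Equiv.Perm.sign σ : ℤ) : K) ≠ 0 := by
    intro σ
    rcases Int.units_eq_one_or (Equiv.Perm.sign σ) with h | h <;> simp [h]
  refine ⟨?_, ?_, ?_⟩
  · intro x hx
    ext i
    have h := hx (fun j => Pi.single (Equiv.swap 0 i j.succ) 1)
    have h2 := det_update_perm (Equiv.swap 0 i) 0 x
    have h3 : (Fin.cons x (fun j : Fin (n + 2) => Pi.single (Equiv.swap 0 i j.succ) 1) :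
        Fin (n + 3) → Fin (n + 3) → K) =
        Function.update (fun j => (Pi.single (Equiv.swap 0 i j) 1 : Fin (n + 3) → K)) 0 x := by
      funext j
      refine Fin.cases ?_ (fun j => ?_) j
      · simp
      · simp [Fin.succ_ne_zero]
    rw [h3, h2, Equiv.swap_apply_left] at h
    exact (mul_eq_zero.mp h).resolve_left (sg _)
  · intro x Y
    have h1 : Matrix.of (Fin.snoc Y x : Fin (n + 3) → Fin (n + 3) → K) =
        (Matrix.of (Fin.cons x Y : Fin (n + 3) → Fin (n + 3) → K)).submatrix
          (finRotate (n + 3)) id := by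
      ext a b
      refine Fin.lastCases ?_ (fun a => ?_) a
      · simp
      · simp [-Fin.coeSucc_eq_succ, Fin.coeSucc_eq_succ]
    have h2 : Matrix.of (Fin.cons (((-1 : K) ^ (n + 2)) • x) Y : Fin (n + 3) → Fin (n + 3) → K) =
        (Matrix.of (Fin.cons x Y : Fin (n + 3) → Fin (n + 3) → K)).updateRow 0
          (((-1 : K) ^ (n + 2)) • x) := by
      ext a b
      refine Fin.cases ?_ (fun a => ?_) a
      · simp
      · simp [Matrix.updateRow_apply, Fin.succ_ne_zero]
    have h3 : (Matrix.of (Fin.cons x Y : Fin (n + 3) → Fin (n + 3) → K)).updateRow 0 x =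
        Matrix.of (Fin.cons x Y : Fin (n + 3) → Fin (n + 3) → K) :=
      Matrix.updateRow_eq_self _ 0
    rw [h1, h2, Matrix.det_permute, Matrix.det_updateRow_smul, h3, sign_finRotate]
    simp
  · intro L₀ L₁ hL
    let e : Fin (n + 3) → Fin (n + 3) → K := fun i => Pi.single i 1
    have diag : ∀ a b, a ≠ b → L₀ (e a) a = L₁ (e b) b := by
      intro a b hab
      obtain ⟨c, hca, hcb⟩ := exists_third a b
      obtain ⟨σ, s0, s1, s2⟩ := exists_perm3 a b c hab hca.symm hcb.symm
      have h := hL (fun i => Pi.single (σ i) 1)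
      rw [det_update_perm, det_update_perm, s0, s1] at h
      exact mul_left_cancel₀ (sg σ) h
    have off0 : ∀ a b, b ≠ a → L₀ (e a) b = 0 := by
      intro a b hab
      obtain ⟨c, hca, hcb⟩ := exists_third a b
      obtain ⟨σ, s0, s1, s2⟩ := exists_perm3 b c a hcb.symm hab hca
      have h := hL (Function.update (fun i => Pi.single (σ i) 1) 0 (e a))
      rw [Function.update_idem, Function.update_self, det_update_perm, s0] at h
      rw [Matrix.det_zero_of_row_eq h02 (by ext j; simp [h01, h02.symm, h12.symm, s2, e])] at h
      exact (mul_eq_zero.mp h).resolve_left (sg _)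
    have off1 : ∀ a b, b ≠ a → L₁ (e a) b = 0 := by
      intro a b hab
      obtain ⟨c, hca, hcb⟩ := exists_third a b
      obtain ⟨σ, s0, s1, s2⟩ := exists_perm3 c b a hcb hca hab
      have h := hL (Function.update (fun i => Pi.single (σ i) 1) 1 (e a))
      simp only [Function.update_idem, Function.update_self] at h
      rw [det_update_perm (j := 1), s1] at h
      rw [Matrix.det_zero_of_row_eq h12 (by ext j; simp [h01.symm, h02.symm, h12.symm, s2, e])] at h
      exact (mul_eq_zero.mp h.symm).resolve_left (sg _)
    have d0 : ∀ a, L₀ (e a) a = L₀ (e 0) 0 := by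
      intro a
      obtain ⟨c, hca, hcb⟩ := exists_third a 0
      rw [diag a c hca.symm, diag 0 c hcb.symm]
    have d1 : ∀ a, L₁ (e a) a = L₀ (e 0) 0 := by
      intro a
      obtain ⟨c, hca, hcb⟩ := exists_third a 0
      rw [← diag c a hca, d0]
    have fin : ∀ L : (Fin (n + 3) → K) →ₗ[K] (Fin (n + 3) → K),
        (∀ a b, b ≠ a → L (e a) b = 0) → (∀ a, L (e a) a = L₀ (e 0) 0) →
        L = (L₀ (e 0) 0) • LinearMap.id := by
      intro L ho hd
      refine (Pi.basisFun K (Fin (n + 3))).ext fun a => ?_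
      rw [Pi.basisFun_apply]
      funext b
      change L (e a) b = L₀ (e 0) 0 * (Pi.single a 1 : Fin (n + 3) → K) b
      by_cases hb : b = a
      · subst hb
        simp [hd]
      · simp [ho a b hb, hb]
    exact ⟨L₀ (e 0) 0, fin L₀ off0 d0, fin L₁ off1 d1⟩
end

section
/- Let K be a field, g ≥ 2, B an invertible g×g matrix over K, and q ∈ K a nonzero scalar satisfying q + q⁻¹ + tr(B⁻¹Bᵗ) = 0. Then the matrix K̂ = q B⁻¹ satisfies the two equations K̂ B K̂ᵗ Bᵗ + (1 + tr(K̂ Bᵗ))·1 = 0 and K̂ᵗ Bᵗ K̂ B + (1 + tr(K̂ Bᵗ))·1 = 0, with 1 + tr(K̂ Bᵗ) = −q². -/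
open Matrix

/-- if `B` is an invertible `g×g` matrix (`g ≥ 2`) and `q ≠ 0` satisfies
`q + q⁻¹ + tr(B⁻¹Bᵗ) = 0`, then `K̂ = q B⁻¹` satisfies
`K̂ B K̂ᵗ Bᵗ + (1 + tr(K̂ Bᵗ))·1 = 0` and `K̂ᵗ Bᵗ K̂ B + (1 + tr(K̂ Bᵗ))·1 = 0`,
with `1 + tr(K̂ Bᵗ) = −q²`. -/
theorem stmt_11 (K : Type*) [Field K] (g : ℕ) (hg : 2 ≤ g)
    (B : Matrix (Fin g) (Fin g) K) (hB : IsUnit B)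
    (q : K) (hq : q ≠ 0) (hsol : q + q⁻¹ + (B⁻¹ * Bᵀ).trace = 0) :
    letI Kh : Matrix (Fin g) (Fin g) K := q • B⁻¹
    Kh * B * Khᵀ * Bᵀ + (1 + (Kh * Bᵀ).trace) • (1 : Matrix (Fin g) (Fin g) K) = 0 ∧
    Khᵀ * Bᵀ * Kh * B + (1 + (Kh * Bᵀ).trace) • (1 : Matrix (Fin g) (Fin g) K) = 0 ∧
    1 + (Kh * Bᵀ).trace = -q ^ 2 := by
  have hdet : IsUnit B.det := (Matrix.isUnit_iff_isUnit_det B).mp hB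
  have h1 : B⁻¹ * B = 1 := Matrix.nonsing_inv_mul B hdet
  have h2 : (B⁻¹)ᵀ * Bᵀ = 1 := by
    rw [← Matrix.transpose_mul, Matrix.mul_nonsing_inv B hdet, Matrix.transpose_one]
  have h3 : 1 + ((q • B⁻¹) * Bᵀ).trace = -q ^ 2 := by
    rw [Matrix.smul_mul, Matrix.trace_smul, smul_eq_mul]
    have h4 : q * q⁻¹ = 1 := mul_inv_cancel₀ hq
    linear_combination q * hsol - h4
  refine ⟨?_, ?_, h3⟩
  · rw [h3, Matrix.transpose_smul, Matrix.smul_mul, h1, Matrix.smul_mul, Matrix.one_mul,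
      Matrix.smul_mul, Matrix.smul_mul, h2, smul_smul, ← add_smul]
    rw [show q * q + -q ^ 2 = 0 by ring, zero_smul]
  · rw [h3, Matrix.transpose_smul, Matrix.smul_mul, h2, Matrix.smul_mul, Matrix.one_mul,
      Matrix.smul_mul, Matrix.smul_mul, h1, smul_smul, ← add_smul]
    rw [show q * q + -q ^ 2 = 0 by ring, zero_smul]
end

section
/- Let K be an algebraically closed field with char K ≠ 2 and let B be an invertible 2×2 matrix over K. Then there exists L ∈ GL(2, K) such that Lᵗ B L is one of the following matrices: (0) [[0,−1],[1,0]]; (1) [[0,−1],[1,1]]; (2) [[0,−1],[q,0]] for some q ∈ K with q² − q ≠ 0. Moreover, for q, q′ ∈ K with q² − q ≠ 0 and q′² − q′ ≠ 0, there exists L ∈ GL(2, K) with Lᵗ [[0,−1],[q,0]] L = [[0,−1],[q′,0]] if and only if q′ = q or q′ = q⁻¹. -/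
open Matrix

/-- Congruence to one of the three normal forms. -/
def HasNF {K : Type*} [Field K] (B : Matrix (Fin 2) (Fin 2) K) : Prop :=
  ∃ L : Matrix (Fin 2) (Fin 2) K, IsUnit L ∧
        (Lᵀ * B * L = !![0, -1; 1, 0] ∨
         Lᵀ * B * L = !![0, -1; 1, 1] ∨
         ∃ q : K, q ^ 2 - q ≠ 0 ∧ Lᵀ * B * L = !![0, -1; q, 0])

theorem HasNF.of_congr {K : Type*} [Field K] {B P : Matrix (Fin 2) (Fin 2) K} (hP : IsUnit P)
    (h : HasNF (Pᵀ * B * P)) : HasNF B := by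
  obtain ⟨L, hL, h⟩ := h
  refine ⟨P * L, hP.mul hL, ?_⟩
  have e : (P * L)ᵀ * B * (P * L) = Lᵀ * (Pᵀ * B * P) * L := by
    simp only [Matrix.transpose_mul, Matrix.mul_assoc]
  rw [e]
  exact h

theorem congr_entries {K : Type*} [Field K] (a b c d x y z w : K) :
    (!![x, y; z, w])ᵀ * !![a, b; c, d] * !![x, y; z, w] =
      !![a*x*x + b*x*z + c*z*x + d*z*z, a*x*y + b*x*w + c*z*y + d*z*w;
         a*x*y + b*y*z + c*w*x + d*z*w, a*y*y + b*y*w + c*w*y + d*w*w] := by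
  ext i j
  fin_cases i <;> fin_cases j <;> simp [Matrix.mul_apply, Fin.sum_univ_two] <;> ring

theorem isUnit_two {K : Type*} [Field K] {x y z w : K} :
    IsUnit !![x, y; z, w] ↔ x * w - y * z ≠ 0 := by
  rw [Matrix.isUnit_iff_isUnit_det, Matrix.det_fin_two_of, isUnit_iff_ne_zero]

theorem mat_ext {K : Type*} [Field K] {a b c d a' b' c' d' : K} (h1 : a = a') (h2 : b = b')
    (h3 : c = c') (h4 : d = d') : !![a, b; c, d] = !![a', b'; c', d'] := by
  rw [h1, h2, h3, h4]

theorem hasNF_of_zero {K : Type*} [Field K] [IsAlgClosed K] (b c d : K) (hb : b ≠ 0) (hc : c ≠ 0) :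
    HasNF !![0, b; c, d] := by
  by_cases hs : b + c = 0
  · have hc' : c = -b := by linear_combination hs
    subst hc'
    by_cases hd : d = 0
    · subst hd
      refine ⟨!![-b⁻¹, 0; 0, 1], isUnit_two.2 (by simp [hb]), Or.inl ?_⟩
      rw [congr_entries]
      apply mat_ext <;> field_simp <;> ring
    · obtain ⟨s, hs'⟩ := IsAlgClosed.exists_pow_nat_eq d⁻¹ (n := 2) (by norm_num)
      have hs0 : s ≠ 0 := by
        rintro rfl
        have := inv_ne_zero hd
        apply this
        rw [← hs']
        ring
      have hds : d * s ^ 2 = 1 := by rw [hs']; field_simp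
      refine ⟨!![-(b * s)⁻¹, 0; 0, s], isUnit_two.2 (by simp [hb, hs0]), Or.inr (Or.inl ?_)⟩
      rw [congr_entries]
      apply mat_ext
      · ring
      · field_simp
        ring
      · field_simp
        ring
      · linear_combination hds
  · refine ⟨!![-b⁻¹, -d / (b + c); 0, 1], isUnit_two.2 (by simp [hb]),
      Or.inr (Or.inr ⟨-c / b, ?_, ?_⟩)⟩
    · have : (-c / b) ^ 2 - (-c / b) = c * (b + c) / b ^ 2 := by field_simp; ring
      rw [this]
      exact div_ne_zero (mul_ne_zero hc hs) (pow_ne_zero _ hb)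
    · rw [congr_entries]
      apply mat_ext <;> field_simp <;> ring

theorem hasNF_all {K : Type*} [Field K] [IsAlgClosed K] (B : Matrix (Fin 2) (Fin 2) K)
    (hB : IsUnit B) : HasNF B := by
  rw [Matrix.eta_fin_two B] at hB ⊢
  generalize B 0 0 = a at *
  generalize B 0 1 = b at *
  generalize B 1 0 = c at *
  generalize B 1 1 = d at *
  rw [isUnit_two] at hB
  by_cases ha : a = 0
  · subst ha
    apply hasNF_of_zero
    · rintro rfl
      simp at hB
    · rintro rfl
      simp at hB
  · obtain ⟨t, ht⟩ : ∃ t : K, a * t ^ 2 + (b + c) * t + d = 0 := by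
      obtain ⟨t, ht⟩ := IsAlgClosed.exists_root
        (Polynomial.C a * Polynomial.X ^ 2 + Polynomial.C (b + c) * Polynomial.X + Polynomial.C d)
        (by rw [Polynomial.degree_quadratic ha]; decide)
      exact ⟨t, by simpa [Polynomial.IsRoot] using ht⟩
    have hP : IsUnit !![t, 1; 1, 0] := isUnit_two.2 (by simp)
    apply HasNF.of_congr hP
    rw [congr_entries]
    have e : !![a*t*t + b*t*1 + c*1*t + d*1*1, a*t*1 + b*t*0 + c*1*1 + d*1*0;
         a*t*1 + b*1*1 + c*0*t + d*1*0, a*1*1 + b*1*0 + c*0*1 + d*0*0] =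
         !![0, a * t + c; a * t + b, a] := by
      apply mat_ext
      · linear_combination ht
      all_goals ring
    rw [e]
    apply hasNF_of_zero
    · intro h
      apply hB
      linear_combination a * ht - (a * t + b) * h
    · intro h
      apply hB
      linear_combination a * ht - (a * t + c) * h


/-- over an algebraically closed field of characteristic `≠ 2`, every
invertible `2×2` matrix `B` is congruent (`B ↦ Lᵀ B L`, `L ∈ GL(2,K)`) to one of:
`[[0,−1],[1,0]]`, `[[0,−1],[1,1]]`, or `[[0,−1],[q,0]]` with `q² − q ≠ 0`; moreover the
matrices `[[0,−1],[q,0]]` and `[[0,−1],[q′,0]]` (with `q² − q ≠ 0`, `q′² − q′ ≠ 0`) are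
congruent if and only if `q′ = q` or `q′ = q⁻¹`. -/
theorem stmt_12 (K : Type*) [Field K] [IsAlgClosed K] (hchar : ringChar K ≠ 2) :
    (∀ B : Matrix (Fin 2) (Fin 2) K, IsUnit B →
      ∃ L : Matrix (Fin 2) (Fin 2) K, IsUnit L ∧
        (Lᵀ * B * L = !![0, -1; 1, 0] ∨
         Lᵀ * B * L = !![0, -1; 1, 1] ∨
         ∃ q : K, q ^ 2 - q ≠ 0 ∧ Lᵀ * B * L = !![0, -1; q, 0])) ∧
    (∀ q q' : K, q ^ 2 - q ≠ 0 → q' ^ 2 - q' ≠ 0 →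
      ((∃ L : Matrix (Fin 2) (Fin 2) K, IsUnit L ∧
          Lᵀ * !![0, -1; q, 0] * L = !![0, -1; q', 0]) ↔ (q' = q ∨ q' = q⁻¹))) := by
  refine ⟨fun B hB => hasNF_all B hB, fun q q' hq hq' => ⟨?_, ?_⟩⟩
  · rintro ⟨L, -, h⟩
    rw [Matrix.eta_fin_two L, congr_entries] at h
    generalize L 0 0 = x at *
    generalize L 0 1 = y at *
    generalize L 1 0 = z at *
    generalize L 1 1 = w at *
    have h00 := congrFun (congrFun h 0) 0
    have h01 := congrFun (congrFun h 0) 1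
    have h10 := congrFun (congrFun h 1) 0
    have h11 := congrFun (congrFun h 1) 1
    simp at h00 h01 h10 h11
    have hq0 : q ≠ 0 := by
      rintro rfl
      simp at hq
    have hq1 : q - 1 ≠ 0 := fun h1 => hq (by linear_combination q * h1)
    have hxz : x * z = 0 := by
      apply (mul_eq_zero.1 (_ : (q - 1) * (x * z) = 0)).resolve_left hq1
      linear_combination h00
    have hyw : y * w = 0 := by
      apply (mul_eq_zero.1 (_ : (q - 1) * (y * w) = 0)).resolve_left hq1
      linear_combination h11
    rcases mul_eq_zero.1 hxz with rfl | rfl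
    · right
      apply eq_inv_of_mul_eq_one_left
      linear_combination (-q) * h10 - h01 + q ^ 2 * 0
    · left
      linear_combination (-1) * h10 - q * h01
  · have hq0 : q ≠ 0 := by
      rintro rfl
      simp at hq
    rintro (rfl | rfl)
    · exact ⟨1, isUnit_one, by simp⟩
    · refine ⟨!![0, 1; -q⁻¹, 0], isUnit_two.2 (by simp [hq0]), ?_⟩
      rw [congr_entries]
      apply mat_ext <;> field_simp <;> ring
end

section
/- Let K be a field and let A be the quotient of the free associative unital K-algebra on three generators x, y, z by the two-sided ideal generated by the three elements x² + yz, y² + zx, and xy. Then in A one has (yz)x = 0 and (yz)y = 0, but there is no element a ∈ A such that a·x = yz, a·y = 0 and a·z = 0. (Consequently the complex 0 → A → A³ → A³ → A → K → 0 built from the presentation fails to be exact at the second position, so A is not a regular algebra of global dimension 3 even though its associated 3-linear form w = x⊗x⊗x + y⊗y⊗y + x⊗y⊗z + y⊗z⊗x + z⊗x⊗y is 3-regular with Q_w = id.) -/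
/-- The relations `x² + yz = 0`, `y² + zx = 0`, `xy = 0` on the free algebra on three
generators `x = ι 0`, `y = ι 1`, `z = ι 2`. -/
def counterRel (K : Type*) [Field K] :
    FreeAlgebra K (Fin 3) → FreeAlgebra K (Fin 3) → Prop := fun a b =>
  b = 0 ∧
    (a = FreeAlgebra.ι K 0 * FreeAlgebra.ι K 0 + FreeAlgebra.ι K 1 * FreeAlgebra.ι K 2 ∨
     a = FreeAlgebra.ι K 1 * FreeAlgebra.ι K 1 + FreeAlgebra.ι K 2 * FreeAlgebra.ι K 0 ∨
     a = FreeAlgebra.ι K 0 * FreeAlgebra.ι K 1)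

/-- Action of the generators on a five-dimensional left module. -/
def actMat (K : Type*) [Field K] : Fin 3 → Matrix (Fin 5) (Fin 5) K :=
  ![!![0,0,0,0,0; 0,0,0,0,0; 1,0,0,0,0; 0,0,0,0,0; 0,0,1,0,0],
    !![0,0,0,0,0; 0,0,0,0,0; 0,0,0,0,0; 0,0,0,0,0; 0,0,0,-1,0],
    !![0,0,0,0,0; 0,0,0,0,0; 0,1,0,0,0; 1,0,0,0,0; 0,0,0,0,0]]

theorem aux_left {R : Type*} [Semiring R] {x y z : R} (h1 : x * x + y * z = 0)
    (h3 : x * y = 0) : y * z * x = 0 := by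
  have hxxx : x * (x * x) = 0 := by
    have h := congrArg (fun t => x * t) h1
    simpa only [mul_add, ← mul_assoc x y z, h3, zero_mul, add_zero, mul_zero] using h
  have h := congrArg (fun t => t * x) h1
  simpa only [add_mul, mul_assoc x x x, hxxx, zero_mul, zero_add] using h

theorem aux_right {R : Type*} [Semiring R] {x y z : R} (h1 : x * x + y * z = 0)
    (h3 : x * y = 0) : y * z * y = 0 := by
  have h := congrArg (fun t => t * y) h1
  simpa only [add_mul, mul_assoc x x y, h3, mul_zero, zero_mul, zero_add] using h

/-- in `A = K⟨x,y,z⟩/[x² + yz, y² + zx, xy]` one has `(yz)x = 0` and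
`(yz)y = 0`, but there is no `a ∈ A` with `a·x = yz`, `a·y = 0` and `a·z = 0`. -/
theorem stmt_13 (K : Type*) [Field K] :
    letI π := RingQuot.mkAlgHom K (counterRel K)
    letI x := π (FreeAlgebra.ι K 0)
    letI y := π (FreeAlgebra.ι K 1)
    letI z := π (FreeAlgebra.ι K 2)
    (y * z) * x = 0 ∧ (y * z) * y = 0 ∧
      ¬ ∃ a : RingQuot (counterRel K), a * x = y * z ∧ a * y = 0 ∧ a * z = 0 := by
  set π := RingQuot.mkAlgHom K (counterRel K) with hπ
  set x := π (FreeAlgebra.ι K 0) with hx0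
  set y := π (FreeAlgebra.ι K 1) with hy0
  set z := π (FreeAlgebra.ι K 2) with hz0
  have h1 : x * x + y * z = 0 := by
    have := RingQuot.mkAlgHom_rel K (s := counterRel K) ⟨rfl, Or.inl rfl⟩
    simpa only [map_add, map_mul, map_zero] using this
  have h3 : x * y = 0 := by
    have := RingQuot.mkAlgHom_rel K (s := counterRel K) ⟨rfl, Or.inr (Or.inr rfl)⟩
    simpa only [map_mul, map_zero] using this
  refine ⟨aux_left h1 h3, aux_right h1 h3, ?_⟩
  · rintro ⟨a, hx, -, hz⟩
    have hrel : ∀ ⦃p q : FreeAlgebra K (Fin 3)⦄, counterRel K p q →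
        FreeAlgebra.lift K (actMat K) p = FreeAlgebra.lift K (actMat K) q := by
      rintro p q ⟨rfl, rfl | rfl | rfl⟩ <;>
      · simp only [map_add, map_mul, map_zero, FreeAlgebra.lift_ι_apply]
        ext i j
        fin_cases i <;> fin_cases j <;> simp [actMat, Matrix.mul_apply, Fin.sum_univ_five]
    let Φ := RingQuot.liftAlgHom K ⟨FreeAlgebra.lift K (actMat K), hrel⟩
    have hΦ : ∀ i, Φ (π (FreeAlgebra.ι K i)) = actMat K i := fun i => by
      simp only [Φ, π, RingQuot.liftAlgHom_mkAlgHom_apply, FreeAlgebra.lift_ι_apply]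
    have e1 := congrArg (fun t => Φ t 4 0) hx
    have e2 := congrArg (fun t => Φ t 4 1) hz
    simp only [hx0, hy0, hz0, map_mul, map_zero, hΦ] at e1 e2
    simp [actMat, Matrix.mul_apply, Fin.sum_univ_five] at e1 e2
    simp [e2] at e1
end

section
/- Let K be a field with char K = 0, n ≥ 2, and G = (G^{λμ}) an invertible symmetric n×n matrix over K. Let w be the 4-linear form on K^n with components W^{abcd} = w(e_a, e_b, e_c, e_d) = G^{ab}G^{cd} + G^{bc}G^{da} − 2 G^{ac}G^{bd}. Then: (1) w is cyclic, i.e. W^{abcd} = W^{dabc} for all indices (so w is Q-cyclic with Q_w = id); (2) w satisfies condition (i): w(X, X₁, X₂, X₃) = 0 for all X₁, X₂, X₃ implies X = 0; (3) w satisfies the strong condition (iii′): for any finite families (Yᵢ), (Zᵢ) in K^n, if Σᵢ w(Yᵢ, Zᵢ, X₁, X₂) = 0 for all X₁, X₂ ∈ K^n then Σᵢ Yᵢ ⊗ Zᵢ = 0 in K^n ⊗ K^n. -/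
open Matrix
open scoped TensorProduct

/-- The pairing `g(X,Y) = Σ_{a,b} G^{ab} X_a Y_b` of a symmetric matrix `G`. -/
def gPair {K : Type*} [Field K] {n : ℕ} (G : Matrix (Fin n) (Fin n) K)
    (X Y : Fin n → K) : K :=
  ∑ a : Fin n, ∑ b : Fin n, G a b * X a * Y b

/-- The Yang–Mills 4-linear form, with components
`W^{abcd} = G^{ab}G^{cd} + G^{bc}G^{da} − 2 G^{ac}G^{bd}`. -/
def ymForm {K : Type*} [Field K] {n : ℕ} (G : Matrix (Fin n) (Fin n) K)
    (X₁ X₂ X₃ X₄ : Fin n → K) : K :=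
  gPair G X₁ X₂ * gPair G X₃ X₄ + gPair G X₂ X₃ * gPair G X₄ X₁ -
    2 * gPair G X₁ X₃ * gPair G X₂ X₄

theorem gPair_eq_dot {K : Type*} [Field K] {n : ℕ} (G : Matrix (Fin n) (Fin n) K)
    (X Y : Fin n → K) : gPair G X Y = X ⬝ᵥ (G *ᵥ Y) := by
  simp only [gPair, dotProduct, mulVec, Finset.mul_sum]
  refine Finset.sum_congr rfl fun a _ => Finset.sum_congr rfl fun b _ => ?_
  ring

theorem gPair_comm {K : Type*} [Field K] {n : ℕ} (G : Matrix (Fin n) (Fin n) K)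
    (hsym : Gᵀ = G) (X Y : Fin n → K) : gPair G X Y = gPair G Y X := by
  unfold gPair
  rw [Finset.sum_comm]
  refine Finset.sum_congr rfl fun a _ => Finset.sum_congr rfl fun b _ => ?_
  have : G b a = G a b := congrFun (congrFun hsym a) b
  rw [this]; ring

theorem gPair_inv {K : Type*} [Field K] {n : ℕ} (G : Matrix (Fin n) (Fin n) K)
    (hinv : IsUnit G) (X : Fin n → K) (p : Fin n) :
    gPair G X (G⁻¹ *ᵥ Pi.single p 1) = X p := by
  have hdet := (Matrix.isUnit_iff_isUnit_det G).1 hinv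
  rw [gPair_eq_dot, mulVec_mulVec, Matrix.mul_nonsing_inv _ hdet, Matrix.one_mulVec]
  simp

theorem ym_key {K : Type*} [Field K] [CharZero K] {m : ℕ}
    (G : Matrix (Fin (m + 2)) (Fin (m + 2)) K) (hsym : Gᵀ = G) (hinv : IsUnit G)
    (k : ℕ) (Y Z : Fin k → (Fin (m + 2) → K))
    (h : ∀ X₁ X₂ : Fin (m + 2) → K, ∑ i, ymForm G (Y i) (Z i) X₁ X₂ = 0)
    (p q : Fin (m + 2)) : ∑ i, Y i p * Z i q = 0 := by
  have hdet := (Matrix.isUnit_iff_isUnit_det G).1 hinv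
  set c : K := ∑ i, gPair G (Y i) (Z i) with hc
  have hH : ∀ p q, (G⁻¹) p q = (G⁻¹) q p := by
    intro p q
    have : (G⁻¹)ᵀ = G⁻¹ := by rw [Matrix.transpose_nonsing_inv, hsym]
    exact congrFun (congrFun this q) p
  have h1 : ∀ p q, c * (G⁻¹) p q + ∑ i, Y i q * Z i p - 2 * ∑ i, Y i p * Z i q = 0 := by
    intro p q
    rw [← h (G⁻¹ *ᵥ Pi.single p 1) (G⁻¹ *ᵥ Pi.single q 1), hc, Finset.sum_mul, Finset.mul_sum,
      ← Finset.sum_add_distrib, ← Finset.sum_sub_distrib]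
    refine Finset.sum_congr rfl fun i _ => ?_
    unfold ymForm
    rw [gPair_comm G hsym (G⁻¹ *ᵥ Pi.single q 1) (Y i)]
    simp only [gPair_inv G hinv]
    rw [hH p q]
    simp
    ring
  have h2 : ∀ p q, ∑ i, Y i p * Z i q = c * (G⁻¹) q p := by
    intro p q
    have a := h1 p q
    have b := h1 q p
    rw [hH p q] at a
    have h3 : (3 : K) ≠ 0 := by norm_num
    apply mul_left_cancel₀ h3
    linear_combination -2 * a - b
  have h3 : c = c * (m + 2) := by
    have e1 : c = ∑ a, ∑ b, G a b * ∑ i, Y i a * Z i b := by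
      rw [hc]
      simp only [gPair, Finset.mul_sum]
      rw [Finset.sum_comm]
      refine Finset.sum_congr rfl fun a _ => ?_
      rw [Finset.sum_comm]
      simp only [mul_assoc]
    have e2 : ∑ a, ∑ b, G a b * (G⁻¹) b a = (m + 2 : K) := by
      have : (G * G⁻¹).trace = (m + 2 : K) := by
        rw [Matrix.mul_nonsing_inv _ hdet]; simp
      rw [← this]
      simp [Matrix.trace, Matrix.mul_apply]
    calc c = ∑ a, ∑ b, G a b * ∑ i, Y i a * Z i b := e1
      _ = c * ∑ a, ∑ b, G a b * (G⁻¹) b a := by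
        simp only [h2, Finset.mul_sum]
        refine Finset.sum_congr rfl fun a _ => Finset.sum_congr rfl fun b _ => ?_
        ring
      _ = _ := by rw [e2]
  have h4 : c = 0 := by
    have : (m + 1 : K) ≠ 0 := by exact_mod_cast Nat.succ_ne_zero m
    have h5 : c * (m + 1 : K) = 0 := by linear_combination -h3
    exact (mul_eq_zero.1 h5).resolve_right this
  rw [h2, h4, zero_mul]

/-- over a field of characteristic zero, for `G` an invertible symmetric
`n×n` matrix (`n = m + 2 ≥ 2`), the Yang–Mills 4-linear form `w` satisfies: (1) it is
cyclic (`Q_w = id`); (2) condition (i): `w(X,·,·,·) = 0` identically implies `X = 0`;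
(3) condition (iii′): `Σᵢ w(Yᵢ, Zᵢ, X₁, X₂) = 0` for all `X₁, X₂` implies
`Σᵢ Yᵢ ⊗ Zᵢ = 0`. -/
theorem stmt_14 (K : Type*) [Field K] [CharZero K] (m : ℕ)
    (G : Matrix (Fin (m + 2)) (Fin (m + 2)) K) (hsym : Gᵀ = G) (hinv : IsUnit G) :
    (∀ X₁ X₂ X₃ X₄ : Fin (m + 2) → K,
      ymForm G X₁ X₂ X₃ X₄ = ymForm G X₄ X₁ X₂ X₃) ∧
    (∀ X : Fin (m + 2) → K,
      (∀ X₁ X₂ X₃ : Fin (m + 2) → K, ymForm G X X₁ X₂ X₃ = 0) → X = 0) ∧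
    (∀ (k : ℕ) (Y Z : Fin k → (Fin (m + 2) → K)),
      (∀ X₁ X₂ : Fin (m + 2) → K, ∑ i, ymForm G (Y i) (Z i) X₁ X₂ = 0) →
      ∑ i, (Y i) ⊗ₜ[K] (Z i) =
        (0 : TensorProduct K (Fin (m + 2) → K) (Fin (m + 2) → K))) := by
  refine ⟨?_, ?_, ?_⟩
  · intro X₁ X₂ X₃ X₄
    unfold ymForm
    rw [gPair_comm G hsym X₄ X₂, gPair_comm G hsym X₄ X₁, gPair_comm G hsym X₃ X₄]
    ring
  · intro X hX
    funext p
    have := ym_key G hsym hinv 1 (fun _ => X) (fun _ => fun _ => 1)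
      (fun X₁ X₂ => by simp [hX]) p 0
    simpa using this
  · intro k Y Z h
    apply ((Pi.basisFun K (Fin (m + 2))).tensorProduct
      (Pi.basisFun K (Fin (m + 2)))).repr.injective
    ext ⟨p, q⟩
    have := ym_key G hsym hinv k Y Z h p q
    simpa [Finsupp.finsetSum_apply, mul_comm] using this
end

section
/- Let K be a field, m ≥ N ≥ 2 integers, and w a preregular m-linear form on K^g (g ≥ 2) with components W_{λ₁…λ_m} = w(e_{λ₁}, …, e_{λ_m}) and associated automorphism Q_w. Let R ⊆ (K^g)^{⊗N} be the linear span of the elements r_{λ₁…λ_{m−N}} = Σ_{μ₁,…,μ_N} W_{λ₁…λ_{m−N}μ₁…μ_N} e_{μ₁} ⊗ ⋯ ⊗ e_{μ_N}, for λ₁, …, λ_{m−N} ∈ {1,…,g}. Then the N-th tensor power (Q_wᵗ)^{⊗N} of the transpose Q_wᵗ of Q_w maps R into R; hence Q_wᵗ induces a degree-0 automorphism of the N-homogeneous algebra A(w, N) = A(E, R) with E = K^g. -/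
open Matrix
open scoped TensorProduct

section

variable (K : Type*) [Field K] (g p ν : ℕ)

/-- The transpose `Q_wᵗ` of an automorphism `Q` of `K^g`, with respect to the canonical
basis (i.e. the linear map whose matrix is the transpose of the matrix of `Q`). -/
noncomputable def transposeMap {K : Type*} [Field K] {g : ℕ}
    (Q : (Fin g → K) ≃ₗ[K] (Fin g → K)) : (Fin g → K) →ₗ[K] (Fin g → K) :=
  Matrix.toLin' (LinearMap.toMatrix' Q.toLinearMap)ᵀ

/-- The generators `r_{λ₁…λ_{m−N}} = Σ_{μ₁,…,μ_N} W_{λ₁…λ_{m−N}μ₁…μ_N} e_{μ₁} ⊗ ⋯ ⊗ e_{μ_N}`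
of the space of relations `R ⊆ (K^g)^{⊗N}` of `A(w, N)`, where `m = p + N`, `N = ν + 2`. -/
noncomputable def relVec
    (w : MultilinearMap K (fun _ : Fin (p + (ν + 2)) => (Fin g → K)) K)
    (lv : Fin p → Fin g) : PiTensorProduct K (fun _ : Fin (ν + 2) => Fin g → K) :=
  ∑ μ : Fin (ν + 2) → Fin g,
    w (Fin.append (fun i => Pi.single (lv i) 1) fun i => Pi.single (μ i) 1) •
      PiTensorProduct.tprod K (fun i => (Pi.single (μ i) 1 : Fin g → K))

/-- The space of relations `R` of the `N`-homogeneous algebra `A(w, N)`. -/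
noncomputable def relSpace
    (w : MultilinearMap K (fun _ : Fin (p + (ν + 2)) => (Fin g → K)) K) :
    Submodule K (PiTensorProduct K (fun _ : Fin (ν + 2) => Fin g → K)) :=
  Submodule.span K (Set.range (relVec K g p ν w))

/-- The defining relations of `A(w, N)` in the free algebra: for each multi-index
`λ₁…λ_{m−N}`, the element `Σ_{μ⃗} W_{λ⃗μ⃗} x^{μ₁}⋯x^{μ_N}` is set to `0`. -/
def relOf (w : MultilinearMap K (fun _ : Fin (p + (ν + 2)) => (Fin g → K)) K) :
    FreeAlgebra K (Fin g) → FreeAlgebra K (Fin g) → Prop := fun a b =>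
  b = 0 ∧ ∃ lv : Fin p → Fin g,
    a = ∑ μ : Fin (ν + 2) → Fin g,
      w (Fin.append (fun i => Pi.single (lv i) 1) fun i => Pi.single (μ i) 1) •
        (List.ofFn fun i => FreeAlgebra.ι K (μ i)).prod

theorem multi_expand {K : Type*} [Field K] {g n : ℕ} {M : Type*} [AddCommGroup M] [Module K M]
    (f : MultilinearMap K (fun _ : Fin n => (Fin g → K)) M) (v : Fin n → (Fin g → K)) :
    f v = ∑ r : Fin n → Fin g, (∏ i, v i (r i)) • f (fun i => Pi.single (r i) 1) := by
  have h : v = fun i => ∑ j : Fin g, v i j • (Pi.single j 1 : Fin g → K) := by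
    funext i
    exact pi_eq_sum_univ' (v i)
  conv_lhs => rw [h]
  rw [MultilinearMap.map_sum]
  refine Finset.sum_congr rfl fun r _ => ?_
  exact f.map_smul_univ (fun i => v i (r i)) (fun i => Pi.single (r i) 1)

theorem transposeMap_single {K : Type*} [Field K] {g : ℕ}
    (Q : (Fin g → K) ≃ₗ[K] (Fin g → K)) (a b : Fin g) :
    transposeMap Q (Pi.single a 1) b = Q (Pi.single b 1) a := by
  simp [transposeMap, LinearMap.toMatrix'_apply]

theorem cyclic_invariant {K : Type*} [Field K] {g n : ℕ}
    (w : MultilinearMap K (fun _ : Fin (n + 1) => (Fin g → K)) K)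
    (Q : (Fin g → K) ≃ₗ[K] (Fin g → K))
    (hQ : ∀ (x : Fin g → K) (Y : Fin n → (Fin g → K)),
      w (Fin.snoc Y x) = w (Fin.cons (Q x) Y)) (X : Fin (n + 1) → (Fin g → K)) :
    w (fun i => Q (X i)) = w X := by
  let X' : ℕ → (Fin g → K) := fun j => if h : j < n + 1 then X ⟨j, h⟩ else 0
  let Z : ℕ → (Fin g → K) := fun j => if j < n + 1 then Q (X' j) else X' (j - (n + 1))
  have key : ∀ k, k ≤ n + 1 →
      w (fun i : Fin (n + 1) => Z (i + k)) = w (fun i : Fin (n + 1) => Z i) := by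
    intro k
    induction k with
    | zero => intro _; rfl
    | succ k ih =>
      intro hk
      rw [← ih (by omega)]
      have h1 : (fun i : Fin (n + 1) => Z (i + (k + 1))) =
          Fin.snoc (fun i : Fin n => Z (i + (k + 1))) (Z (n + (k + 1))) := by
        funext i
        refine Fin.lastCases ?_ (fun j => ?_) i
        · simp
        · simp
      have h2 : (fun i : Fin (n + 1) => Z (i + k)) =
          Fin.cons (Q (Z (n + (k + 1)))) (fun i : Fin n => Z (i + (k + 1))) := by
        funext i
        refine Fin.cases ?_ (fun j => ?_) i
        · have e : n + (k + 1) - (n + 1) = k := by omega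
          have e2 : ¬ (n + (k + 1) < n + 1) := by omega
          have e3 : k < n + 1 := by omega
          simp only [Fin.cons_zero, Fin.val_zero, zero_add, Z, if_neg e2, if_pos e3, e]
        · simp only [Fin.cons_succ, Fin.val_succ]
          congr 1
          omega
      rw [h1, h2]
      exact hQ _ _
  have := key (n + 1) le_rfl
  have h1 : (fun i : Fin (n + 1) => Z (i + (n + 1))) = X := by
    funext i
    have e : ¬ ((i : ℕ) + (n + 1) < n + 1) := by omega
    simp only [Z, X', if_neg e, Nat.add_sub_cancel, dif_pos i.2]
  have h2 : (fun i : Fin (n + 1) => Z i) = fun i => Q (X i) := by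
    funext i
    simp only [Z, X', if_pos i.2, dif_pos i.2]
  rw [h1, h2] at this
  exact this.symm

/-- The form `w` seen as a multilinear map in its first `p` arguments, with values in
multilinear maps in the last `N` ones. -/
noncomputable def splitForm {K : Type*} [Field K] {g p N : ℕ}
    (w : MultilinearMap K (fun _ : Fin (p + N) => (Fin g → K)) K) :
    MultilinearMap K (fun _ : Fin p => (Fin g → K))
      (MultilinearMap K (fun _ : Fin N => (Fin g → K)) K) :=
  (w.domDomCongr (finSumFinEquiv (m := p) (n := N)).symm).currySum

theorem splitForm_apply {K : Type*} [Field K] {g p N : ℕ}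
    (w : MultilinearMap K (fun _ : Fin (p + N) => (Fin g → K)) K)
    (x : Fin p → (Fin g → K)) (y : Fin N → (Fin g → K)) :
    splitForm w x y = w (Fin.append x y) := by
  simp only [splitForm, MultilinearMap.currySum_apply, MultilinearMap.domDomCongr_apply]
  congr 1
  funext i
  refine Fin.addCases (fun j => ?_) (fun j => ?_) i
  · simp
  · simp

/-- Transposition moves from the tensor side to the form side. -/
theorem sum_transpose {K : Type*} [Field K] {g N : ℕ} {M : Type*} [AddCommGroup M] [Module K M]
    (F : MultilinearMap K (fun _ : Fin N => (Fin g → K)) M)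
    (u : MultilinearMap K (fun _ : Fin N => (Fin g → K)) K)
    (Q : (Fin g → K) ≃ₗ[K] (Fin g → K)) :
    ∑ μ : Fin N → Fin g, u (fun i => Pi.single (μ i) 1) •
        F (fun i => transposeMap Q (Pi.single (μ i) 1)) =
      ∑ μ : Fin N → Fin g, u (fun i => Q (Pi.single (μ i) 1)) •
        F (fun i => Pi.single (μ i) 1) := by
  have h1 : ∀ μ : Fin N → Fin g, u (fun i => Pi.single (μ i) 1) •
        F (fun i => transposeMap Q (Pi.single (μ i) 1)) =
      ∑ r : Fin N → Fin g, (u (fun i => Pi.single (μ i) 1) *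
        ∏ i, Q (Pi.single (r i) 1) (μ i)) • F (fun i => Pi.single (r i) 1) := by
    intro μ
    rw [multi_expand F, Finset.smul_sum]
    simp only [transposeMap_single, smul_smul]
  rw [Finset.sum_congr rfl fun μ _ => h1 μ, Finset.sum_comm]
  refine Finset.sum_congr rfl fun r _ => ?_
  rw [← Finset.sum_smul]
  congr 1
  rw [multi_expand u]
  refine Finset.sum_congr rfl fun μ _ => ?_
  rw [smul_eq_mul, mul_comm]

theorem sum_mem_span {K : Type*} [Field K] {g p N : ℕ} {M : Type*} [AddCommGroup M] [Module K M]
    (F : MultilinearMap K (fun _ : Fin N => (Fin g → K)) M)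
    (w : MultilinearMap K (fun _ : Fin (p + N) => (Fin g → K)) K)
    (S : Submodule K M)
    (hS : ∀ lv : Fin p → Fin g, ∑ μ : Fin N → Fin g,
      w (Fin.append (fun i => Pi.single (lv i) 1) fun i => Pi.single (μ i) 1) •
        F (fun i => Pi.single (μ i) 1) ∈ S)
    (Q : (Fin g → K) ≃ₗ[K] (Fin g → K))
    (hw : ∀ X, w (fun i => Q (X i)) = w X) (lv : Fin p → Fin g) :
    ∑ μ : Fin N → Fin g,
      w (Fin.append (fun i => Pi.single (lv i) 1) fun i => Pi.single (μ i) 1) •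
        F (fun i => transposeMap Q (Pi.single (μ i) 1)) ∈ S := by
  have h := sum_transpose F (splitForm w (fun i => Pi.single (lv i) 1)) Q
  simp only [splitForm_apply] at h
  rw [h]
  have h2 : ∀ μ : Fin N → Fin g,
      w (Fin.append (fun i => Pi.single (lv i) 1) fun i => Q (Pi.single (μ i) 1)) =
      ∑ r : Fin p → Fin g, (∏ i, Q.symm (Pi.single (lv i) 1) (r i)) *
        w (Fin.append (fun i => Pi.single (r i) 1) fun i => Pi.single (μ i) 1) := by
    intro μ
    have e : (Fin.append (fun i => Pi.single (lv i) 1) fun i => Q (Pi.single (μ i) 1)) =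
        fun j => Q ((Fin.append (fun i => Q.symm (Pi.single (lv i) 1))
          fun i => (Pi.single (μ i) 1 : Fin g → K)) j) := by
      funext j
      refine Fin.addCases (fun j => ?_) (fun j => ?_) j
      · simp
      · simp
    rw [e, hw, ← splitForm_apply, multi_expand (splitForm w), MultilinearMap.sum_apply]
    refine Finset.sum_congr rfl fun r _ => ?_
    rw [MultilinearMap.smul_apply, splitForm_apply, smul_eq_mul]
  simp only [h2, Finset.sum_smul]
  rw [Finset.sum_comm]
  refine S.sum_mem fun r _ => ?_
  simp only [mul_smul]
  rw [← Finset.smul_sum]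
  exact S.smul_mem _ (hS r)

/-- The images of the generators. -/
noncomputable def genImg (w : MultilinearMap K (fun _ : Fin (p + (ν + 2)) => (Fin g → K)) K)
    (Q : (Fin g → K) ≃ₗ[K] (Fin g → K)) (l : Fin g) : RingQuot (relOf K g p ν w) :=
  ∑ μ : Fin g, (transposeMap Q (Pi.single l 1) μ) •
    RingQuot.mkAlgHom K (relOf K g p ν w) (FreeAlgebra.ι K μ)

theorem genImg_rel (w : MultilinearMap K (fun _ : Fin (p + (ν + 2)) => (Fin g → K)) K)
    (Q : (Fin g → K) ≃ₗ[K] (Fin g → K))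
    (hw : ∀ X, w (fun i => Q (X i)) = w X) ⦃a b : FreeAlgebra K (Fin g)⦄
    (hab : relOf K g p ν w a b) :
    FreeAlgebra.lift K (genImg K g p ν w Q) a = FreeAlgebra.lift K (genImg K g p ν w Q) b := by
  obtain ⟨rfl, lv, rfl⟩ := hab
  let L : (Fin g → K) →ₗ[K] RingQuot (relOf K g p ν w) :=
    Fintype.linearCombination K
      (fun μ => RingQuot.mkAlgHom K (relOf K g p ν w) (FreeAlgebra.ι K μ))
  let F := (MultilinearMap.mkPiAlgebraFin K (ν + 2) (RingQuot (relOf K g p ν w))).compLinearMap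
    (fun _ => L)
  have hL : ∀ l, L (transposeMap Q (Pi.single l 1)) = genImg K g p ν w Q l := by
    intro l
    simp only [L, Fintype.linearCombination_apply, genImg]
  have hL1 : ∀ l, L (Pi.single l 1) = RingQuot.mkAlgHom K (relOf K g p ν w) (FreeAlgebra.ι K l) := by
    intro l
    simp [L]
  have := sum_mem_span F w ⊥ (by
    intro lv
    rw [Submodule.mem_bot]
    have h := RingQuot.mkAlgHom_rel K (s := relOf K g p ν w) ⟨rfl, lv, rfl⟩
    rw [map_zero, map_sum] at h
    rw [← h]
    refine Finset.sum_congr rfl fun μ _ => ?_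
    rw [map_smul, map_list_prod, List.map_ofFn]
    simp only [F, MultilinearMap.compLinearMap_apply, MultilinearMap.mkPiAlgebraFin_apply, hL1]
    rfl) Q hw lv
  rw [Submodule.mem_bot] at this
  rw [map_zero, ← this, map_sum]
  refine Finset.sum_congr rfl fun μ _ => ?_
  rw [map_smul, map_list_prod, List.map_ofFn]
  simp only [F, MultilinearMap.compLinearMap_apply, MultilinearMap.mkPiAlgebraFin_apply, hL]
  congr 3
  funext i
  simp

/-- The induced endomorphism. -/
noncomputable def indHom (w : MultilinearMap K (fun _ : Fin (p + (ν + 2)) => (Fin g → K)) K)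
    (Q : (Fin g → K) ≃ₗ[K] (Fin g → K)) (hw : ∀ X, w (fun i => Q (X i)) = w X) :
    RingQuot (relOf K g p ν w) →ₐ[K] RingQuot (relOf K g p ν w) :=
  RingQuot.liftAlgHom K ⟨FreeAlgebra.lift K (genImg K g p ν w Q), genImg_rel K g p ν w Q hw⟩

theorem indHom_gen (w : MultilinearMap K (fun _ : Fin (p + (ν + 2)) => (Fin g → K)) K)
    (Q : (Fin g → K) ≃ₗ[K] (Fin g → K)) (hw : ∀ X, w (fun i => Q (X i)) = w X) (l : Fin g) :
    indHom K g p ν w Q hw (RingQuot.mkAlgHom K (relOf K g p ν w) (FreeAlgebra.ι K l)) =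
      genImg K g p ν w Q l := by
  simp [indHom]

theorem indHom_comp (w : MultilinearMap K (fun _ : Fin (p + (ν + 2)) => (Fin g → K)) K)
    (Q P : (Fin g → K) ≃ₗ[K] (Fin g → K)) (hw : ∀ X, w (fun i => Q (X i)) = w X)
    (hw' : ∀ X, w (fun i => P (X i)) = w X) (hPQ : ∀ x, P (Q x) = x) :
    (indHom K g p ν w Q hw).comp (indHom K g p ν w P hw') = AlgHom.id K _ := by
  refine RingQuot.ringQuot_ext' K _ _ (FreeAlgebra.hom_ext (funext fun l => ?_))
  simp only [Function.comp_apply, AlgHom.comp_apply, AlgHom.id_apply]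
  rw [indHom_gen, genImg, map_sum]
  simp only [map_smul, indHom_gen]
  simp only [genImg, Finset.smul_sum, smul_smul]
  rw [Finset.sum_comm]
  simp only [← Finset.sum_smul, transposeMap_single]
  have h : ∀ b, ∑ c, P (Pi.single c 1) l * Q (Pi.single b 1) c =
      (Pi.single b 1 : Fin g → K) l := by
    intro b
    conv_rhs => rw [← hPQ (Pi.single b 1), pi_eq_sum_univ' (Q (Pi.single b 1)), map_sum]
    rw [Finset.sum_apply]
    refine Finset.sum_congr rfl fun c _ => ?_
    rw [map_smul, Pi.smul_apply, smul_eq_mul, mul_comm]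
  simp only [h]
  rw [Finset.sum_eq_single l]
  · simp
  · intro b _ hb
    rw [Pi.single_eq_of_ne hb.symm, zero_smul]
  · simp

/-- for a preregular `m`-linear form `w` on `K^g` (`m = p + N ≥ N = ν + 2`)
with associated automorphism `Q_w = Q`, the `N`-th tensor power of the transpose `Q_wᵗ`
maps the space of relations `R` of `A(w, N)` into itself; hence `Q_wᵗ` induces a degree-0
automorphism of the `N`-homogeneous algebra `A(w, N)`. -/
theorem stmt_19 (hg : 2 ≤ g)
    (w : MultilinearMap K (fun _ : Fin (p + (ν + 2)) => (Fin g → K)) K)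
    (Q : (Fin g → K) ≃ₗ[K] (Fin g → K))
    (hi : ∀ x : Fin g → K,
      (∀ Y : Fin (p + (ν + 1)) → (Fin g → K), w (Fin.cons x Y) = 0) → x = 0)
    (hQ : ∀ (x : Fin g → K) (Y : Fin (p + (ν + 1)) → (Fin g → K)),
      w (Fin.snoc Y x) = w (Fin.cons (Q x) Y)) :
    Submodule.map (PiTensorProduct.map fun _ : Fin (ν + 2) => transposeMap Q)
        (relSpace K g p ν w) ≤ relSpace K g p ν w ∧
    ∃ φ : RingQuot (relOf K g p ν w) ≃ₐ[K] RingQuot (relOf K g p ν w),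
      ∀ l : Fin g,
        φ (RingQuot.mkAlgHom K (relOf K g p ν w) (FreeAlgebra.ι K l)) =
          ∑ μ : Fin g, (transposeMap Q (Pi.single l 1) μ) •
            RingQuot.mkAlgHom K (relOf K g p ν w) (FreeAlgebra.ι K μ) := by
  have hw : ∀ X, w (fun i => Q (X i)) = w X := cyclic_invariant (n := p + (ν + 1)) w Q hQ
  have hw' : ∀ X, w (fun i => Q.symm (X i)) = w X := by
    intro X
    rw [← hw]
    simp
  constructor
  · rw [relSpace, Submodule.map_span_le]
    rintro _ ⟨lv, rfl⟩
    have := sum_mem_span (PiTensorProduct.tprod K) w (relSpace K g p ν w)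
      (fun lv => Submodule.subset_span ⟨lv, rfl⟩) Q hw lv
    rw [relVec, map_sum]
    simp only [map_smul, PiTensorProduct.map_tprod]
    exact this
  · refine ⟨AlgEquiv.ofAlgHom (indHom K g p ν w Q hw) (indHom K g p ν w Q.symm hw')
      (indHom_comp K g p ν w Q Q.symm hw hw' (by simp))
      (indHom_comp K g p ν w Q.symm Q hw' hw (by simp)), fun l => ?_⟩
    exact indHom_gen K g p ν w Q hw l

end
end
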